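/- Let ω₋ < ω₊ be real numbers, let Φ : ℝ → ℝ be a non-decreasing bounded function with Φ(λ) ≤ 0 for all λ, and let g : ℝ → [0,∞) be a bounded probability density (∫_ℝ g = 1) with g(λ) = 0 for λ ∉ [ω₋, ω₊]. Then for every γ > 0 one has ∫_ℝ (Φ(λ+γ) − Φ(λ)) g(λ) dλ ≤ −γ · ‖g‖_∞ · Φ(ω₋), where ‖g‖_∞ denotes the essential supremum of g. -/

import Mathlib

open MeasureTheory

/-- The unnamed integration lemma in Section 4: for a non-decreasing bounded non-positive
function `Φ` and a bounded probability density `g` supported in `[ω₋, ω₊]`, one has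
`∫ (Φ(λ+γ) − Φ(λ)) g(λ) dλ ≤ −γ ‖g‖_∞ Φ(ω₋)` for all `γ > 0`. -/
theorem wegner_integration_lemma
    (ωm ωp : ℝ) (hω : ωm < ωp)
    (Φ : ℝ → ℝ) (hΦmono : Monotone Φ) (hΦbdd : ∃ C, ∀ x, |Φ x| ≤ C)
    (hΦneg : ∀ x, Φ x ≤ 0)
    (g : ℝ → ℝ) (hg0 : ∀ x, 0 ≤ g x) (hgbdd : ∃ J, ∀ x, g x ≤ J)
    (hgint : Integrable g) (hgprob : ∫ x, g x = 1)
    (hgsupp : ∀ x, x ∉ Set.Icc ωm ωp → g x = 0)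
    (γ : ℝ) (hγ : 0 < γ) :
    ∫ lam, (Φ (lam + γ) - Φ lam) * g lam ≤ -γ * (eLpNorm g ⊤ volume).toReal * Φ ωm := by
  obtain ⟨J, hJ⟩ := hgbdd
  set M := (eLpNorm g ⊤ volume).toReal with hM
  have hfin : eLpNorm g ⊤ volume ≠ ⊤ := by
    have h : MemLp g ⊤ volume := memLp_top_of_bound hgint.aestronglyMeasurable J
      (Filter.Eventually.of_forall fun x => by
        rw [Real.norm_eq_abs, abs_of_nonneg (hg0 x)]; exact hJ x)
    exact h.2.ne
  have hgM : ∀ᵐ x, g x ≤ M := by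
    have h := ae_le_eLpNormEssSup (f := g) (μ := volume)
    filter_upwards [h] with x hx
    rw [← eLpNorm_exponent_top] at hx
    have h2 := ENNReal.toReal_mono hfin hx
    rw [toReal_enorm, Real.norm_eq_abs, abs_of_nonneg (hg0 x)] at h2
    exact h2
  have hM0 : 0 ≤ M := ENNReal.toReal_nonneg
  have hi : ∀ a b, IntervalIntegrable Φ volume a b := fun a b => hΦmono.intervalIntegrable
  have hmono2 : Monotone fun x => Φ (x + γ) := fun x y h => hΦmono (by linarith)
  have hi2 : ∀ a b, IntervalIntegrable (fun x => Φ (x + γ)) volume a b :=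
    fun a b => hmono2.intervalIntegrable
  have hd : ∀ x, 0 ≤ Φ (x + γ) - Φ x := fun x => sub_nonneg.2 (hΦmono (by linarith))
  have e1 : ∫ x, (Φ (x + γ) - Φ x) * g x
      = ∫ x in Set.Icc ωm ωp, (Φ (x + γ) - Φ x) * g x :=
    (setIntegral_eq_integral_of_forall_compl_eq_zero fun x hx => by
      rw [hgsupp x hx, mul_zero]).symm
  rw [e1, integral_Icc_eq_integral_Ioc]
  have e2 : ∫ x in Set.Ioc ωm ωp, (Φ (x + γ) - Φ x) * g x
      ≤ ∫ x in Set.Ioc ωm ωp, (Φ (x + γ) - Φ x) * M := by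
    apply integral_mono_of_nonneg
    · exact Filter.Eventually.of_forall fun x => mul_nonneg (hd x) (hg0 x)
    · exact (((hi2 ωm ωp).sub (hi ωm ωp)).1).mul_const M
    · filter_upwards [ae_restrict_of_ae hgM] with x hx
      exact mul_le_mul_of_nonneg_left hx (hd x)
  refine e2.trans ?_
  rw [← intervalIntegral.integral_of_le hω.le, intervalIntegral.integral_mul_const,
    intervalIntegral.integral_sub (hi2 _ _) (hi _ _),
    intervalIntegral.integral_comp_add_right (fun x => Φ x)]
  have a1 := intervalIntegral.integral_add_adjacent_intervals (hi ωm (ωm + γ)) (hi (ωm + γ) (ωp + γ))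
  have a2 := intervalIntegral.integral_add_adjacent_intervals (hi ωm ωp) (hi ωp (ωp + γ))
  have b1 : ∫ x in ωp..(ωp + γ), Φ x ≤ 0 := by
    have := intervalIntegral.integral_mono_on (by linarith : ωp ≤ ωp + γ) (hi _ _)
      (intervalIntegrable_const (c := (0 : ℝ))) (fun x _ => hΦneg x)
    simpa using this
  have b2 : γ * Φ ωm ≤ ∫ x in ωm..(ωm + γ), Φ x := by
    have := intervalIntegral.integral_mono_on (by linarith : ωm ≤ ωm + γ)
      (intervalIntegrable_const (c := Φ ωm)) (hi _ _) (fun x hx => hΦmono hx.1)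
    simpa using this
  have c : (∫ x in (ωm + γ)..(ωp + γ), Φ x) - ∫ x in ωm..ωp, Φ x ≤ -(γ * Φ ωm) := by linarith
  have := mul_le_mul_of_nonneg_right c hM0
  linarith
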